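/- The new 6-point kernel φ is continuous on all of ℝ; in particular the piecewise formulas match at the integer breakpoints: p_k(1) = p_{k+1}(0) for k ∈ {−3, −2, −1, 0, 1}, p₋₃(0) = 0, and p₂(1) = 0. -/

import Mathlib

noncomputable section

namespace IB6

/-- The special second-moment constant `K = 59/60 − √29/20`. -/
def K : ℝ := 59 / 60 - Real.sqrt 29 / 20

/-- `α = 28`. -/
def a : ℝ := 28

/-- `β(r)`. -/
def b (r : ℝ) : ℝ :=
  9 / 4 - (3 / 2) * (K + r ^ 2) * r + (22 / 3 - 7 * K) * r - (7 / 3) * r ^ 3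

/-- `γ(r)`. -/
def c (r : ℝ) : ℝ :=
  -(11 / 32) * r ^ 2 + (3 / 32) * (2 * K + r ^ 2) * r ^ 2
    + (1 / 72) * ((3 * K - 1) * r + r ^ 3) ^ 2
    + (1 / 18) * ((4 - 3 * K) * r - r ^ 3) ^ 2

/-- `p₋₃(r) = (−β(r) + √(β(r)² − 4αγ(r)))/(2α)`. -/
def pm3 (r : ℝ) : ℝ := (-b r + Real.sqrt (b r ^ 2 - 4 * a * c r)) / (2 * a)

/-- `p₋₂(r)`. -/
def pm2 (r : ℝ) : ℝ :=
  -3 * pm3 r - 1 / 16 + (K + r ^ 2) / 8 + (3 * K - 1) * r / 12 + r ^ 3 / 12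

/-- `p₋₁(r)`. -/
def pm1 (r : ℝ) : ℝ := 2 * pm3 r + 1 / 4 + (4 - 3 * K) * r / 6 - r ^ 3 / 6

/-- `p₀(r)`. -/
def p0 (r : ℝ) : ℝ := 2 * pm3 r + 5 / 8 - (K + r ^ 2) / 4

/-- `p₁(r)`. -/
def p1 (r : ℝ) : ℝ := -3 * pm3 r + 1 / 4 - (4 - 3 * K) * r / 6 + r ^ 3 / 6

/-- `p₂(r)`. -/
def p2 (r : ℝ) : ℝ :=
  pm3 r - 1 / 16 + (K + r ^ 2) / 8 - (3 * K - 1) * r / 12 - r ^ 3 / 12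

/-- The new 6-point immersed-boundary kernel `φ`. -/
def phi (x : ℝ) : ℝ :=
  if -3 ≤ x ∧ x < -2 then pm3 (x - (-3))
  else if -2 ≤ x ∧ x < -1 then pm2 (x - (-2))
  else if -1 ≤ x ∧ x < 0 then pm1 (x - (-1))
  else if 0 ≤ x ∧ x < 1 then p0 (x - 0)
  else if 1 ≤ x ∧ x < 2 then p1 (x - 1)
  else if 2 ≤ x ∧ x < 3 then p2 (x - 2)
  else 0

theorem K_quad : 180 * K ^ 2 - 354 * K + 161 = 0 := by
  have h : Real.sqrt 29 ^ 2 = 29 := Real.sq_sqrt (by norm_num)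
  unfold K
  nlinarith [h]

theorem K_le : K ≤ 1 := by
  have := Real.sqrt_nonneg 29
  unfold K
  linarith

theorem pm3_zero : pm3 0 = 0 := by
  have h : Real.sqrt (b 0 ^ 2 - 4 * a * c 0) = b 0 := by
    rw [show b 0 ^ 2 - 4 * a * c 0 = b 0 ^ 2 by simp [c]]
    exact Real.sqrt_sq (by norm_num [b])
  unfold pm3
  rw [h]
  simp

theorem pm3_one : pm3 1 = -1 / 16 + K / 8 := by
  have hK := K_quad
  have h : Real.sqrt (b 1 ^ 2 - 4 * a * c 1) = 9 / 4 - 3 / 2 * K := by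
    rw [show b 1 ^ 2 - 4 * a * c 1 = (9 / 4 - 3 / 2 * K) ^ 2 by
      unfold a b c
      linarith [hK]]
    exact Real.sqrt_sq (by linarith [K_le])
  unfold pm3
  rw [h]
  unfold a b
  ring

theorem pm3_cont : Continuous pm3 := by
  unfold pm3 b c
  fun_prop

theorem pm2_cont : Continuous pm2 := by
  have := pm3_cont
  unfold pm2
  fun_prop

theorem pm1_cont : Continuous pm1 := by
  have := pm3_cont
  unfold pm1
  fun_prop

theorem p0_cont : Continuous p0 := by
  have := pm3_cont
  unfold p0
  fun_prop

theorem p1_cont : Continuous p1 := by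
  have := pm3_cont
  unfold p1
  fun_prop

theorem p2_cont : Continuous p2 := by
  have := pm3_cont
  unfold p2
  fun_prop

theorem phi_eq : phi = fun x : ℝ =>
    if 3 ≤ x then 0 else if 2 ≤ x then p2 (x - 2) else if 1 ≤ x then p1 (x - 1)
    else if 0 ≤ x then p0 (x - 0) else if -1 ≤ x then pm1 (x - (-1))
    else if -2 ≤ x then pm2 (x - (-2)) else if -3 ≤ x then pm3 (x - (-3)) else 0 := by
  funext x
  unfold phi
  split_ifs <;> first | rfl | (exfalso; grind)

/-- The new 6-point kernel is continuous on all of `ℝ`; in particular the piecewise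
formulas match at the integer breakpoints. -/
theorem new6pt_continuous :
    Continuous phi ∧
    pm3 1 = pm2 0 ∧ pm2 1 = pm1 0 ∧ pm1 1 = p0 0 ∧ p0 1 = p1 0 ∧ p1 1 = p2 0 ∧
    pm3 0 = 0 ∧ p2 1 = 0 := by
  have e0 := pm3_zero
  have e1 := pm3_one
  have h1 : pm3 1 = pm2 0 := by unfold pm2; rw [e0, e1]; ring
  have h2 : pm2 1 = pm1 0 := by unfold pm2 pm1; rw [e0, e1]; ring
  have h3 : pm1 1 = p0 0 := by unfold pm1 p0; rw [e0, e1]; ring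
  have h4 : p0 1 = p1 0 := by unfold p0 p1; rw [e0, e1]; ring
  have h5 : p1 1 = p2 0 := by unfold p1 p2; rw [e0, e1]; ring
  have h6 : p2 1 = 0 := by unfold p2; rw [e1]; ring
  refine ⟨?_, h1, h2, h3, h4, h5, e0, h6⟩
  have c1 := pm3_cont
  have c2 := pm2_cont
  have c3 := pm1_cont
  have c4 := p0_cont
  have c5 := p1_cont
  have c6 := p2_cont
  rw [phi_eq]
  refine Continuous.if_le (by fun_prop) ?_ continuous_const continuous_id ?_
  · refine Continuous.if_le (by fun_prop) ?_ continuous_const continuous_id ?_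
    · refine Continuous.if_le (by fun_prop) ?_ continuous_const continuous_id ?_
      · refine Continuous.if_le (by fun_prop) ?_ continuous_const continuous_id ?_
        · refine Continuous.if_le (by fun_prop) ?_ continuous_const continuous_id ?_
          · refine Continuous.if_le (by fun_prop) ?_ continuous_const continuous_id ?_
            · refine Continuous.if_le (by fun_prop) (by fun_prop) continuous_const continuous_id ?_
              rintro x rfl
              norm_num [e0]
            · rintro x rfl
              norm_num [h1]
          · rintro x rfl
            norm_num [h2]
        · rintro x rfl
          norm_num [h3]
      · rintro x rfl
        norm_num [h4]
    · rintro x rfl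
      norm_num [h5]
  · rintro x rfl
    norm_num [h6]


end IB6
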